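/- arXiv:1608.06847 — 2 statements merged into one kernel-verified Lean document; each statement's English description precedes it below -/
import Mathlib

section
/- Let P ∈ ℤ[x] be a polynomial of degree d ≥ 2 and let (m_n)_{n≥1} be a sequence of pairwise distinct integers such that for some t ∈ ℕ one has |m_n| ≤ n^t for all sufficiently large n. Then for Lebesgue-almost all real α, for every ε > 0 there are infinitely many N with N·D_N*({P(m_1)α}, …, {P(m_N)α}) ≥ N^{1/2 − ε}. -/
open Filter MeasureTheory

/-- Star-discrepancy of the first `N` points `x 1, ..., x N` of a sequence in `[0,1)`. -/
noncomputable def starDisc (N : ℕ) (x : ℕ → ℝ) : ℝ :=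
  ⨆ β : Set.Ioc (0:ℝ) 1,
    |(((Finset.Icc 1 N).filter fun n => 0 ≤ x n ∧ x n < (β : ℝ)).card : ℝ) / N - (β : ℝ)|

/-!
For `a n = P (m n)` and `N = M ^ s`, expand `∑ h ≤ M ^ 3, |∑ n ≤ N, e (h * a n * α)| ^ 2` into a
diagonal of size at least `M ^ 3 * N` and off-diagonal terms. The latter are controlled in mean
square by the number of solutions of `h * (P x - P y) = k` for fixed `k ≠ 0`. Both `h` and `x - y`
divide `k`, and since `deg P ≥ 2` the values of `x - y` and `P x - P y` leave at most `deg P`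
choices for `x`; as `k` is polynomial in `M`, the divisor bound gives `O(M)` solutions.
By Chebyshev's inequality the exceptional `α` form a set of measure `O(M / M ^ 3)`, which is
summable, so for almost every `α` and all large `M` the Borel–Cantelli lemma yields an `h ≤ M ^ 3`
whose exponential sum has norm at least `√(N / 2)`. Koksma's inequality turns this into
`N * D_N* ≫ N ^ (1 / 2) / M ^ 3`, and the loss `M ^ 3 = N ^ (3 / s)` is smaller than `N ^ ε` once
`s * ε > 3`.
-/

section DivisorBound

open Finset

theorem natCast_add_one_le_mul_pow {x : ℝ} (hx : 1 < x) (a : ℕ) :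
    (a + 1 : ℝ) ≤ (1 + 1 / (x - 1)) * x ^ a := by
  have hy : 0 < x - 1 := sub_pos.mpr hx
  calc (a + 1 : ℝ) ≤ a + 1 + (a * (x - 1) + 1 / (x - 1)) := by
        linarith [show 0 ≤ a * (x - 1) + 1 / (x - 1) by positivity]
    _ = (1 + 1 / (x - 1)) * (1 + a * (x - 1)) := by field_simp; ring
    _ ≤ (1 + 1 / (x - 1)) * x ^ a := by
        gcongr
        simpa using one_add_mul_le_pow (a := x - 1) (by linarith) a

theorem natCast_add_one_le_pow {x : ℝ} (hx : 2 ≤ x) (a : ℕ) : (a + 1 : ℝ) ≤ x ^ a :=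
  calc (a + 1 : ℝ) ≤ 2 ^ a := by exact_mod_cast Nat.lt_two_pow_self
    _ ≤ x ^ a := by gcongr

theorem prod_primeFactors_rpow_pow_factorization (δ : ℝ) {n : ℕ} (hn : n ≠ 0) :
    ∏ p ∈ n.primeFactors, ((p : ℝ) ^ δ) ^ n.factorization p = (n : ℝ) ^ δ := by
  calc ∏ p ∈ n.primeFactors, ((p : ℝ) ^ δ) ^ n.factorization p
      = ∏ p ∈ n.primeFactors, ((p : ℝ) ^ n.factorization p) ^ δ :=
        prod_congr rfl fun p _ => (Real.rpow_pow_comm p.cast_nonneg δ _)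
    _ = (∏ p ∈ n.primeFactors, (p : ℝ) ^ n.factorization p) ^ δ :=
        Real.finsetProd_rpow _ _ (fun _ _ => by positivity) δ
    _ = (n : ℝ) ^ δ := by
        congr 1
        exact_mod_cast Nat.prod_factorization_pow_eq_self hn

theorem exists_card_divisors_le_mul_rpow {δ : ℝ} (hδ : 0 < δ) :
    ∃ C : ℝ, ∀ n : ℕ, (#n.divisors : ℝ) ≤ C * (n : ℝ) ^ δ := by
  obtain ⟨M, hM⟩ := exists_nat_gt ((2 : ℝ) ^ (1 / δ))
  have htwo : 1 < (2 : ℝ) ^ δ := Real.one_lt_rpow one_lt_two hδ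
  set C₀ : ℝ := 1 + 1 / ((2 : ℝ) ^ δ - 1)
  have hC₀_one : 1 ≤ C₀ := le_add_of_nonneg_right (one_div_nonneg.mpr (sub_pos.mpr htwo).le)
  -- Only the primes below `2 ^ (1 / δ)` contribute a factor exceeding `1` to `τ(n) / n ^ δ`.
  have hprime (p a : ℕ) (hp : p.Prime) :
      (a + 1 : ℝ) ≤ (if p < M then C₀ else 1) * ((p : ℝ) ^ δ) ^ a := by
    split_ifs with hpM
    · calc (a + 1 : ℝ) ≤ C₀ * ((2 : ℝ) ^ δ) ^ a := natCast_add_one_le_mul_pow htwo a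
        _ ≤ C₀ * ((p : ℝ) ^ δ) ^ a := by
            gcongr
            exact_mod_cast hp.two_le
    · rw [one_mul]
      refine natCast_add_one_le_pow ?_ a
      rw [← Real.rpow_inv_le_iff_of_pos two_pos.le p.cast_nonneg hδ, ← one_div]
      exact hM.le.trans (by exact_mod_cast not_lt.mp hpM)
  refine ⟨C₀ ^ M, fun n => ?_⟩
  rcases eq_or_ne n 0 with rfl | hn
  · simp [Real.zero_rpow hδ.ne']
  calc (#n.divisors : ℝ) = ∏ p ∈ n.primeFactors, (n.factorization p + 1 : ℝ) := by
        rw [Nat.card_divisors hn]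
        push_cast
        rfl
    _ ≤ ∏ p ∈ n.primeFactors,
          ((if p < M then C₀ else 1) * ((p : ℝ) ^ δ) ^ n.factorization p) :=
        prod_le_prod (fun _ _ => by positivity)
          fun p hp => hprime p _ (Nat.prime_of_mem_primeFactors hp)
    _ = C₀ ^ #{p ∈ n.primeFactors | p < M} * (n : ℝ) ^ δ := by
        rw [prod_mul_distrib, prod_primeFactors_rpow_pow_factorization δ hn, prod_ite, prod_const,
          prod_const_one, mul_one]
    _ ≤ C₀ ^ M * (n : ℝ) ^ δ := by
        gcongr
        simpa using card_le_card (t := range M) fun p hp =>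
          mem_range.mpr (mem_filter.mp hp).2

theorem card_int_divisors (k : ℤ) : #k.divisors = 2 * #k.natAbs.divisors := by
  rw [Int.divisors, card_disjUnion, card_map, card_map, two_mul]

theorem exists_card_int_divisors_le_mul_rpow {δ : ℝ} (hδ : 0 < δ) :
    ∃ C : ℝ, ∀ k : ℤ, (#k.divisors : ℝ) ≤ C * |(k : ℝ)| ^ δ := by
  obtain ⟨C, hC⟩ := exists_card_divisors_le_mul_rpow hδ
  refine ⟨2 * C, fun k => ?_⟩
  calc (#k.divisors : ℝ) = 2 * #k.natAbs.divisors := by exact_mod_cast card_int_divisors k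
    _ ≤ 2 * (C * (k.natAbs : ℝ) ^ δ) := by gcongr; exact hC _
    _ = 2 * C * |(k : ℝ)| ^ δ := by rw [Nat.cast_natAbs, Int.cast_abs, mul_assoc]

end DivisorBound

section PolynomialDifferences

open Finset Polynomial

theorem comp_X_add_C_sub_self_ne_C {R : Type*} [CommRing R] [IsDomain R] [CharZero R] {P : R[X]}
    (hP : 2 ≤ P.natDegree) {d : R} (hd : d ≠ 0) (k : R) : P.comp (X + C d) - P ≠ C k := by
  intro hconst
  have hstep (x : R) : P.eval (x + d) = P.eval x + k := by
    simpa [sub_eq_iff_eq_add'] using congrArg (eval x) hconst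
  have hlinear (n : ℕ) : P.eval (d * n) = k * n + P.eval 0 := by
    induction n with
    | zero => simp
    | succ n ih => rw [Nat.cast_add_one, mul_add_one, hstep, ih]; ring
  have hcomp : P.comp (C d * X) = C k * X + C (P.eval 0) := by
    refine eq_of_infinite_eval_eq _ _ ((Set.infinite_range_of_injective
      (Nat.cast_injective (R := R))).mono ?_)
    rintro _ ⟨n, rfl⟩
    simp [hlinear]
  have hdegree : P.natDegree = (C k * X + C (P.eval 0)).natDegree := by
    rw [← hcomp, natDegree_comp, natDegree_C_mul_X d hd, mul_one]
  have hlinear_degree : (C k * X + C (P.eval 0)).natDegree ≤ 1 := natDegree_linear_le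
  omega

theorem card_le_natDegree_of_sub_eq_of_eval_sub_eval_eq {R : Type*} [CommRing R] [IsDomain R]
    [CharZero R] {P : R[X]} (hP : 2 ≤ P.natDegree) {d k : R} (hd : d ≠ 0) {S : Finset (R × R)}
    (hS : ∀ q ∈ S, q.1 - q.2 = d ∧ P.eval q.1 - P.eval q.2 = k) : #S ≤ P.natDegree := by
  classical
  set Q := P.comp (X + C d) - P - C k
  have hQ : Q ≠ 0 := sub_ne_zero.mpr (comp_X_add_C_sub_self_ne_C hP hd k)
  have hQdeg : Q.natDegree ≤ P.natDegree := by
    refine natDegree_sub_C.trans_le ((natDegree_sub_le _ _).trans (max_le ?_ le_rfl))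
    exact natDegree_comp_le.trans (by rw [natDegree_X_add_C, mul_one])
  have hmaps : Set.MapsTo Prod.snd (S : Set (R × R)) Q.roots.toFinset := fun q hq => by
    obtain ⟨hsub, heval⟩ := hS q hq
    have : q.2 + d = q.1 := by rw [← hsub]; ring
    simpa [hQ, Q, this, sub_eq_zero] using heval
  have hinj : Set.InjOn Prod.snd (S : Set (R × R)) := fun q hq q' hq' h =>
    Prod.ext (by rw [sub_eq_iff_eq_add.mp (hS q hq).1, sub_eq_iff_eq_add.mp (hS q' hq').1, h]) h
  calc #S ≤ #Q.roots.toFinset := card_le_card_of_injOn _ hmaps hinj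
    _ ≤ Q.natDegree := (Multiset.toFinset_card_le _).trans (card_roots' Q)
    _ ≤ P.natDegree := hQdeg

theorem card_le_natDegree_mul_card_divisors {P : ℤ[X]} (hP : 2 ≤ P.natDegree) {k : ℤ} (hk : k ≠ 0)
    {S : Finset (ℤ × ℤ)} (hS : ∀ q ∈ S, P.eval q.1 - P.eval q.2 = k) :
    #S ≤ P.natDegree * #k.divisors := by
  refine card_le_mul_card_image_of_maps_to (f := fun q => q.1 - q.2)
    (fun q hq => Int.mem_divisors.mpr ⟨hS q hq ▸ sub_dvd_eval_sub q.1 q.2 P, hk⟩) _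
    fun d hd => ?_
  have hd0 : d ≠ 0 := ne_zero_of_dvd_ne_zero hk (Int.dvd_of_mem_divisors hd)
  refine card_le_natDegree_of_sub_eq_of_eval_sub_eval_eq (k := k) hP hd0 fun q hq => ?_
  obtain ⟨hqS, hqd⟩ := mem_filter.mp hq
  exact ⟨hqd, hS q hqS⟩

/-- A set of integers has sparse differences if every non-zero integer `k` is the difference of
only `O_δ(|k| ^ δ)` ordered pairs of its elements, for every `δ > 0`. The number of pairs is bounded
through the finite sets of such pairs, so that its finiteness is part of the condition. -/
def HasSparseDifferences (A : Set ℤ) : Prop :=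
  ∀ δ : ℝ, 0 < δ → ∃ C : ℝ, ∀ k : ℤ, k ≠ 0 → ∀ S : Finset (ℤ × ℤ),
    (∀ q ∈ S, q.1 ∈ A ∧ q.2 ∈ A ∧ q.1 - q.2 = k) → (#S : ℝ) ≤ C * |(k : ℝ)| ^ δ

theorem HasSparseDifferences.mono {A B : Set ℤ} (hB : HasSparseDifferences B) (hAB : A ⊆ B) :
    HasSparseDifferences A := fun δ hδ => by
  obtain ⟨C, hC⟩ := hB δ hδ
  exact ⟨C, fun k hk S hS => hC k hk S fun q hq =>
    ⟨hAB (hS q hq).1, hAB (hS q hq).2.1, (hS q hq).2.2⟩⟩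

theorem hasSparseDifferences_range_eval {P : ℤ[X]} (hP : 2 ≤ P.natDegree) :
    HasSparseDifferences (Set.range fun x => P.eval x) := by
  intro δ hδ
  obtain ⟨C, hC⟩ := exists_card_int_divisors_le_mul_rpow hδ
  refine ⟨P.natDegree * C, fun k hk S hS => ?_⟩
  have hlift : (S : Set (ℤ × ℤ)) ⊆
      Prod.map (P.eval ·) (P.eval ·) '' {q | P.eval q.1 - P.eval q.2 = k} := fun q hq => by
    obtain ⟨⟨x, hx⟩, ⟨y, hy⟩, hxy⟩ := hS q hq
    exact ⟨(x, y), by simpa [← hx, ← hy] using hxy, Prod.ext hx hy⟩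
  obtain ⟨S', hS', rfl⟩ := subset_set_image_iff.mp hlift
  calc (#(S'.image (Prod.map (P.eval ·) (P.eval ·))) : ℝ) ≤ #S' := by
        exact_mod_cast card_image_le
    _ ≤ P.natDegree * #k.divisors := by
        exact_mod_cast card_le_natDegree_mul_card_divisors hP hk fun q hq => hS' hq
    _ ≤ P.natDegree * (C * |(k : ℝ)| ^ δ) := by gcongr; exact hC k
    _ = P.natDegree * C * |(k : ℝ)| ^ δ := by ring

theorem HasSparseDifferences.exists_card_mul_sub_eq_le {A : Set ℤ} (hA : HasSparseDifferences A)
    {δ : ℝ} (hδ : 0 < δ) :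
    ∃ C : ℝ, 0 ≤ C ∧ ∀ (k : ℤ), k ≠ 0 → ∀ S : Finset (ℤ × ℤ × ℤ),
      (∀ q ∈ S, q.2.1 ∈ A ∧ q.2.2 ∈ A ∧ q.1 * (q.2.1 - q.2.2) = k) →
        (#S : ℝ) ≤ C * |(k : ℝ)| ^ δ := by
  obtain ⟨C, hC⟩ := hA (δ / 2) (half_pos hδ)
  obtain ⟨D, hD⟩ := exists_card_int_divisors_le_mul_rpow (half_pos hδ)
  have hC0 : 0 ≤ C := by simpa using hC 1 one_ne_zero ∅ (by simp)
  have hD0 : 0 ≤ D := by simpa using (Nat.cast_nonneg _).trans (hD 1)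
  refine ⟨D * C, mul_nonneg hD0 hC0, fun k hk S hS => ?_⟩
  have hmaps : ∀ q ∈ S, q.1 ∈ k.divisors := fun q hq =>
    Int.mem_divisors.mpr ⟨⟨_, (hS q hq).2.2.symm⟩, hk⟩
  have hfibre : ∀ h ∈ k.divisors, (#{q ∈ S | q.1 = h} : ℝ) ≤ C * |(k : ℝ)| ^ (δ / 2) := by
    intro h hh
    obtain ⟨l, rfl⟩ := Int.dvd_of_mem_divisors hh
    obtain ⟨hh0, hl0⟩ := mul_ne_zero_iff.mp hk
    have hinj : Set.InjOn Prod.snd (SetLike.coe {q ∈ S | q.1 = h}) := fun q hq q' hq' hqq' =>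
      Prod.ext ((mem_filter.mp hq).2.trans (mem_filter.mp hq').2.symm) hqq'
    rw [← card_image_of_injOn hinj]
    refine (hC l hl0 _ ?_).trans ?_
    · intro q hq
      obtain ⟨q', hq', rfl⟩ := mem_image.mp hq
      obtain ⟨hqS, rfl⟩ := mem_filter.mp hq'
      exact ⟨(hS q' hqS).1, (hS q' hqS).2.1, mul_left_cancel₀ hh0 (hS q' hqS).2.2⟩
    · have hle : |l| ≤ |h * l| :=
        abs_mul h l ▸ le_mul_of_one_le_left (abs_nonneg l) (Int.one_le_abs hh0)
      exact mul_le_mul_of_nonneg_left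
        (Real.rpow_le_rpow (abs_nonneg _) (by exact_mod_cast hle) (half_pos hδ).le) hC0
  calc (#S : ℝ) = ∑ h ∈ k.divisors, (#{q ∈ S | q.1 = h} : ℝ) := by
        exact_mod_cast card_eq_sum_card_fiberwise hmaps
    _ ≤ #k.divisors * (C * |(k : ℝ)| ^ (δ / 2)) := by
        simpa using sum_le_card_nsmul _ _ _ hfibre
    _ ≤ D * |(k : ℝ)| ^ (δ / 2) * (C * |(k : ℝ)| ^ (δ / 2)) := by gcongr; exact hD k
    _ = D * C * (|(k : ℝ)| ^ (δ / 2) * |(k : ℝ)| ^ (δ / 2)) := by ring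
    _ = D * C * |(k : ℝ)| ^ δ := by
        rw [← Real.rpow_add (abs_pos.mpr (Int.cast_ne_zero.mpr hk)), add_halves]

theorem isBigO_eval_comp (P : ℤ[X]) {ι : Type*} {l : Filter ι} {m : ι → ℤ} {g : ι → ℝ}
    (hm : (fun i => (m i : ℝ)) =O[l] g) (hg : ∀ᶠ i in l, 1 ≤ g i) :
    (fun i => ((P.eval (m i) : ℤ) : ℝ)) =O[l] fun i => g i ^ P.natDegree := by
  have hterm : ∀ j ∈ range (P.natDegree + 1),
      (fun i => (P.coeff j : ℝ) * (m i : ℝ) ^ j) =O[l] fun i => g i ^ P.natDegree := by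
    refine fun j hj => ((hm.pow j).trans (.of_norm_eventuallyLE ?_)).const_mul_left _
    filter_upwards [hg] with i hi
    rw [Real.norm_of_nonneg (by positivity)]
    exact pow_le_pow_right₀ hi (mem_range_succ_iff.mp hj)
  simpa only [eval_eq_sum_range, Int.cast_sum, Int.cast_mul, Int.cast_pow]
    using Asymptotics.IsBigO.fun_sum hterm

end PolynomialDifferences

section FourierMeanSquare

open Finset AddCircle
open scoped ComplexConjugate

theorem sum_norm_sum_mul_fourier_sq {T : ℝ} (R X : Finset ℤ) (w : ℤ → ℂ)
    (x : AddCircle T) :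
    ((∑ h ∈ R, ‖∑ u ∈ X, w u * fourier (h * u) x‖ ^ 2 : ℝ) : ℂ)
      = (#R * ∑ u ∈ X, ‖w u‖ ^ 2 : ℝ)
        + ∑ τ ∈ R ×ˢ X.offDiag,
            w τ.2.1 * conj (w τ.2.2) * fourier (τ.1 * (τ.2.1 - τ.2.2)) x := by
  have hterm (h u v : ℤ) : w u * fourier (h * u) x * conj (w v * fourier (h * v) x)
      = w u * conj (w v) * fourier (h * (u - v)) x := by
    rw [mul_sub, sub_eq_add_neg, fourier_add, fourier_neg, map_mul]
    ring
  have hsq (h : ℤ) : ((‖∑ u ∈ X, w u * fourier (h * u) x‖ ^ 2 : ℝ) : ℂ)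
      = (∑ u ∈ X, ‖w u‖ ^ 2 : ℝ)
        + ∑ q ∈ X.offDiag, w q.1 * conj (w q.2) * fourier (h * (q.1 - q.2)) x := by
    rw [Complex.ofReal_pow, ← Complex.mul_conj', map_sum, sum_mul_sum, ← sum_product',
      ← diag_union_offDiag, sum_union (disjoint_diag_offDiag X), sum_diag]
    simp only [hterm, sub_self, mul_zero, fourier_zero, mul_one, Complex.mul_conj']
    push_cast
    rfl
  rw [Complex.ofReal_sum, sum_congr rfl fun h _ => hsq h, sum_add_distrib, sum_const, nsmul_eq_mul,
    sum_product]
  push_cast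
  rfl

variable {T : ℝ} [hT : Fact (0 < T)]

theorem integral_norm_sum_mul_fourier_sq (s : Finset ℤ) (b : ℤ → ℂ) :
    ∫ x : AddCircle T, ‖∑ k ∈ s, b k * fourier k x‖ ^ 2 ∂haarAddCircle = ∑ k ∈ s, ‖b k‖ ^ 2 := by
  have hinner := orthonormal_fourier (T := T).inner_sum b b s
  simp only [fourierLp, ← map_smul, ← map_sum, ContinuousMap.inner_toLp, RCLike.conj_mul,
    RCLike.mul_conj] at hinner
  simp only [ContinuousMap.coe_sum, ContinuousMap.coe_smul, Finset.sum_apply, Pi.smul_apply,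
    smul_eq_mul, ← RCLike.ofReal_pow, integral_ofReal, ← RCLike.ofReal_sum] at hinner
  exact_mod_cast hinner

theorem integral_norm_sum_mul_fourier_sq_le {ι : Type*} (S : Finset ι) (φ : ι → ℤ) (c : ι → ℂ)
    {K : ℝ} (hK : ∀ k ∈ S.image φ, #{τ ∈ S | φ τ = k} ≤ K) :
    ∫ x : AddCircle T, ‖∑ τ ∈ S, c τ * fourier (φ τ) x‖ ^ 2 ∂haarAddCircle
      ≤ K * ∑ τ ∈ S, ‖c τ‖ ^ 2 := by
  have hmaps : ∀ τ ∈ S, φ τ ∈ S.image φ := fun τ => mem_image_of_mem φ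
  have hcollect (x : AddCircle T) : ∑ τ ∈ S, c τ * fourier (φ τ) x
      = ∑ k ∈ S.image φ, (∑ τ ∈ S with φ τ = k, c τ) * fourier k x := by
    rw [← sum_fiberwise_of_maps_to hmaps]
    refine sum_congr rfl fun k _ => ?_
    rw [sum_mul]
    exact sum_congr rfl fun τ hτ => by rw [(mem_filter.mp hτ).2]
  simp only [hcollect]
  rw [integral_norm_sum_mul_fourier_sq, ← sum_fiberwise_of_maps_to hmaps, mul_sum]
  refine sum_le_sum fun k hk => ?_
  calc ‖∑ τ ∈ S with φ τ = k, c τ‖ ^ 2 ≤ (∑ τ ∈ S with φ τ = k, ‖c τ‖) ^ 2 := by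
        gcongr
        exact norm_sum_le _ _
    _ ≤ #{τ ∈ S | φ τ = k} * ∑ τ ∈ S with φ τ = k, ‖c τ‖ ^ 2 := sq_sum_le_card_mul_sum_sq
    _ ≤ K * ∑ τ ∈ S with φ τ = k, ‖c τ‖ ^ 2 := by
        gcongr
        exact hK k hk

theorem integral_norm_sum_offDiag_mul_fourier_sq_le {R X : Finset ℤ} (w : ℤ → ℂ) {K : ℝ}
    (hR₀ : 0 ∉ R) (hK₀ : 0 ≤ K)
    (hK : ∀ k ≠ 0, #{τ ∈ R ×ˢ X.offDiag | τ.1 * (τ.2.1 - τ.2.2) = k} ≤ K) :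
    ∫ x : AddCircle T, ‖∑ τ ∈ R ×ˢ X.offDiag,
        w τ.2.1 * conj (w τ.2.2) * fourier (τ.1 * (τ.2.1 - τ.2.2)) x‖ ^ 2 ∂haarAddCircle
      ≤ K * (#R * (∑ u ∈ X, ‖w u‖ ^ 2) ^ 2) := by
  refine (integral_norm_sum_mul_fourier_sq_le _ _ _
    (forall_mem_image.mpr fun τ hτ => hK _ ?_)).trans (mul_le_mul_of_nonneg_left ?_ hK₀)
  · rw [mem_product, mem_offDiag] at hτ
    exact mul_ne_zero (ne_of_mem_of_not_mem hτ.1 hR₀) (sub_ne_zero.mpr hτ.2.2.2)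
  · simp only [sum_product, norm_mul, RCLike.norm_conj, mul_pow, sum_const, nsmul_eq_mul]
    gcongr
    rw [sq (∑ u ∈ X, _), sum_mul_sum, ← sum_product']
    exact sum_le_sum_of_subset_of_nonneg (product_sdiff_diag X ▸ sdiff_subset)
      fun _ _ _ => by positivity

theorem haarAddCircle_real_sum_norm_sq_le_half {R X : Finset ℤ} {w : ℤ → ℂ} {K : ℝ}
    (hR : R.Nonempty) (hR₀ : 0 ∉ R) (hw : 0 < ∑ u ∈ X, ‖w u‖ ^ 2)
    (hK : ∀ k ≠ 0, #{τ ∈ R ×ˢ X.offDiag | τ.1 * (τ.2.1 - τ.2.2) = k} ≤ K) :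
    haarAddCircle.real {x : AddCircle T |
      ∑ h ∈ R, ‖∑ u ∈ X, w u * fourier (h * u) x‖ ^ 2 ≤ #R * (∑ u ∈ X, ‖w u‖ ^ 2) / 2}
        ≤ 4 * K / #R := by
  set E : ℝ := ∑ u ∈ X, ‖w u‖ ^ 2
  set small : Set (AddCircle T) :=
    {x | ∑ h ∈ R, ‖∑ u ∈ X, w u * fourier (h * u) x‖ ^ 2 ≤ #R * E / 2}
  set offDiagonal : AddCircle T → ℂ := fun x => ∑ τ ∈ R ×ˢ X.offDiag,
    w τ.2.1 * conj (w τ.2.2) * fourier (τ.1 * (τ.2.1 - τ.2.2)) x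
  have hcard : (0 : ℝ) < #R := by exact_mod_cast hR.card_pos
  have hK₀ : 0 ≤ K := (Nat.cast_nonneg _).trans (hK 1 one_ne_zero)
  have hsmall : small ⊆ {x | (#R * E / 2) ^ 2 ≤ ‖offDiagonal x‖ ^ 2} := by
    intro x hx
    have hnorm := norm_sub_norm_le ((#R * E : ℝ) : ℂ) (-offDiagonal x)
    rw [sub_neg_eq_add, ← sum_norm_sum_mul_fourier_sq, norm_neg,
      Complex.norm_of_nonneg (by positivity), Complex.norm_of_nonneg (by positivity)] at hnorm
    have hle : #R * E / 2 ≤ ‖offDiagonal x‖ := by linarith [hx.out]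
    exact pow_le_pow_left₀ (by positivity) hle 2
  have hint : Integrable (fun x => ‖offDiagonal x‖ ^ 2) haarAddCircle :=
    Continuous.integrable_of_hasCompactSupport (by fun_prop) (.of_compactSpace _)
  have hchebyshev : (#R * E / 2) ^ 2 * haarAddCircle.real small ≤ K * (#R * E ^ 2) :=
    calc (#R * E / 2) ^ 2 * haarAddCircle.real small
        ≤ (#R * E / 2) ^ 2 * haarAddCircle.real {x | (#R * E / 2) ^ 2 ≤ ‖offDiagonal x‖ ^ 2} := by
          gcongr
          exact measure_ne_top _ _
      _ ≤ ∫ x, ‖offDiagonal x‖ ^ 2 ∂haarAddCircle :=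
          mul_meas_ge_le_integral_of_nonneg (.of_forall fun x => by positivity) hint _
      _ ≤ K * (#R * E ^ 2) := integral_norm_sum_offDiag_mul_fourier_sq_le w hR₀ hK₀ hK
  rw [le_div_iff₀ hcard, ← mul_le_mul_iff_right₀ (show 0 < #R * E ^ 2 / 4 by positivity)]
  linarith

theorem haarAddCircle_real_sum_norm_sum_fourier_sq_le_half {ι : Type*} {s : Finset ι}
    (hs : s.Nonempty) (a : ι → ℤ) {R : Finset ℤ} {K : ℝ} (hR : R.Nonempty) (hR₀ : 0 ∉ R)
    (hK : ∀ k ≠ 0, #{τ ∈ R ×ˢ (s.image a).offDiag | τ.1 * (τ.2.1 - τ.2.2) = k} ≤ K) :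
    haarAddCircle.real {x : AddCircle T |
      ∑ h ∈ R, ‖∑ n ∈ s, fourier (h * a n) x‖ ^ 2 ≤ #R * #s / 2} ≤ 4 * K / #R := by
  set r : ℤ → ℕ := fun u => #{n ∈ s | a n = u}
  have hcollect (h : ℤ) (x : AddCircle T) :
      ∑ n ∈ s, fourier (h * a n) x = ∑ u ∈ s.image a, (r u : ℂ) * fourier (h * u) x := by
    simpa only [nsmul_eq_mul] using sum_comp (fun u => fourier (h * u) x) a
  -- Repeated frequencies only enlarge the diagonal.
  have hweights : (#s : ℝ) ≤ ∑ u ∈ s.image a, ‖(r u : ℂ)‖ ^ 2 := by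
    simp only [Complex.norm_natCast]
    exact_mod_cast (card_eq_sum_card_image a s).trans_le
      (sum_le_sum fun u _ => Nat.le_self_pow two_ne_zero (r u))
  have hcard : (0 : ℝ) < #s := by exact_mod_cast hs.card_pos
  refine le_trans (measureReal_mono (fun x hx => ?_) (measure_ne_top _ _))
    (haarAddCircle_real_sum_norm_sq_le_half hR hR₀ (hcard.trans_le hweights) hK)
  simp only [Set.mem_ofPred_eq, hcollect] at hx ⊢
  exact hx.trans (by gcongr)

theorem exists_abs_mul_sub_le_mul_pow {a : ℕ → ℤ} {u : ℕ}
    (ha : (fun n => (a n : ℝ)) =O[atTop] fun n => (n : ℝ) ^ u) (s : ℕ) :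
    ∃ B : ℝ, 0 ≤ B ∧ ∀ (M : ℕ), ∀ h ∈ Icc (1 : ℤ) (M ^ 3), ∀ i ∈ Icc 1 (M ^ s), ∀ j ∈ Icc 1 (M ^ s),
      |((h * (a i - a j) : ℤ) : ℝ)| ≤ B * (M : ℝ) ^ (3 + s * u) := by
  obtain ⟨B, hB, haB⟩ := Asymptotics.bound_of_isBigO_nat_atTop ha
  have hterm (M n : ℕ) (hn : n ∈ Icc 1 (M ^ s)) : |(a n : ℝ)| ≤ B * (M : ℝ) ^ (s * u) := by
    obtain ⟨hn₁, hnM⟩ := mem_Icc.mp hn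
    calc |(a n : ℝ)| ≤ B * ‖(n : ℝ) ^ u‖ := haB (by positivity)
      _ = B * (n : ℝ) ^ u := by rw [Real.norm_of_nonneg (by positivity)]
      _ ≤ B * ((M : ℝ) ^ s) ^ u := by gcongr; exact_mod_cast hnM
      _ = B * (M : ℝ) ^ (s * u) := by rw [pow_mul]
  refine ⟨2 * B, by positivity, fun M h hh i hi j hj => ?_⟩
  obtain ⟨hh₁, hhM⟩ := mem_Icc.mp hh
  have hfreq : |(h : ℝ)| ≤ (M : ℝ) ^ 3 := by
    rw [abs_of_nonneg (by positivity)]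
    exact_mod_cast hhM
  calc |((h * (a i - a j) : ℤ) : ℝ)| = |(h : ℝ)| * |(a i : ℝ) - a j| := by push_cast; rw [abs_mul]
    _ ≤ (M : ℝ) ^ 3 * (B * (M : ℝ) ^ (s * u) + B * (M : ℝ) ^ (s * u)) := by
        gcongr
        exact (abs_sub _ _).trans (add_le_add (hterm M i hi) (hterm M j hj))
    _ = 2 * B * (M : ℝ) ^ (3 + s * u) := by ring

theorem exists_card_mul_sub_eq_le_mul {a : ℕ → ℤ} (ha : HasSparseDifferences (Set.range a)) {u : ℕ}
    (hgrowth : (fun n => (a n : ℝ)) =O[atTop] fun n => (n : ℝ) ^ u) (s : ℕ) :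
    ∃ C : ℝ, ∀ M : ℕ, ∀ k ≠ 0,
      #{τ ∈ Icc (1 : ℤ) (M ^ 3) ×ˢ ((Icc 1 (M ^ s)).image a).offDiag | τ.1 * (τ.2.1 - τ.2.2) = k}
        ≤ C * M := by
  obtain ⟨B, hB, hsize⟩ := exists_abs_mul_sub_le_mul_pow hgrowth s
  have hδ : 0 < ((3 + s * u : ℕ) : ℝ)⁻¹ := by positivity
  obtain ⟨C, hC₀, hC⟩ := ha.exists_card_mul_sub_eq_le hδ
  refine ⟨C * B ^ ((3 + s * u : ℕ) : ℝ)⁻¹, fun M k hk => ?_⟩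
  set S := {τ ∈ Icc (1 : ℤ) (M ^ 3) ×ˢ ((Icc 1 (M ^ s)).image a).offDiag |
    τ.1 * (τ.2.1 - τ.2.2) = k}
  have hS : ∀ τ ∈ S, (∃ i, a i = τ.2.1) ∧ (∃ j, a j = τ.2.2) ∧ τ.1 * (τ.2.1 - τ.2.2) = k ∧
      |(k : ℝ)| ≤ B * (M : ℝ) ^ (3 + s * u) := by
    rintro ⟨h, x, y⟩ hτ
    simp only [S, mem_filter, mem_product, mem_offDiag, mem_image] at hτ
    obtain ⟨⟨hh, ⟨i, hi, rfl⟩, ⟨j, hj, rfl⟩, -⟩, rfl⟩ := hτ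
    exact ⟨⟨i, rfl⟩, ⟨j, rfl⟩, rfl, hsize M h hh i hi j hj⟩
  rcases S.eq_empty_or_nonempty with hS₀ | ⟨τ, hτ⟩
  · rw [hS₀, card_empty, Nat.cast_zero]
    positivity
  calc (#S : ℝ) ≤ C * |(k : ℝ)| ^ ((3 + s * u : ℕ) : ℝ)⁻¹ :=
        hC k hk S fun τ hτ => ⟨(hS τ hτ).1, (hS τ hτ).2.1, (hS τ hτ).2.2.1⟩
    _ ≤ C * (B * (M : ℝ) ^ (3 + s * u)) ^ ((3 + s * u : ℕ) : ℝ)⁻¹ := by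
        gcongr
        exact (hS τ hτ).2.2.2
    _ = C * B ^ ((3 + s * u : ℕ) : ℝ)⁻¹ * M := by
        rw [Real.mul_rpow hB (by positivity), Real.pow_rpow_inv_natCast M.cast_nonneg
          (by positivity), mul_assoc]

theorem card_Icc_one_natCast_pow (M j : ℕ) : #(Icc (1 : ℤ) (M ^ j)) = M ^ j := by
  rw [Int.card_Icc, add_sub_cancel_right, ← Nat.cast_pow, Int.toNat_natCast]

theorem exists_haarAddCircle_real_sum_norm_sum_fourier_sq_le_half_le {a : ℕ → ℤ}
    (ha : HasSparseDifferences (Set.range a)) {u : ℕ}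
    (hgrowth : (fun n => (a n : ℝ)) =O[atTop] fun n => (n : ℝ) ^ u) (s : ℕ) :
    ∃ C : ℝ, ∀ M : ℕ, 1 ≤ M → haarAddCircle.real {x : AddCircle T |
      ∑ h ∈ Icc (1 : ℤ) (M ^ 3), ‖∑ n ∈ Icc 1 (M ^ s), fourier (h * a n) x‖ ^ 2
        ≤ (M : ℝ) ^ 3 * (M : ℝ) ^ s / 2} ≤ C * (1 / (M : ℝ) ^ 2) := by
  obtain ⟨C, hC⟩ := exists_card_mul_sub_eq_le_mul ha hgrowth s
  refine ⟨4 * C, fun M hM => ?_⟩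
  have hR : (Icc (1 : ℤ) (M ^ 3)).Nonempty := by
    rw [← card_pos, card_Icc_one_natCast_pow]
    positivity
  have hbound := haarAddCircle_real_sum_norm_sum_fourier_sq_le_half (T := T)
    (nonempty_Icc.mpr (Nat.one_le_pow s M hM)) a hR (by simp) (hC M)
  rw [card_Icc_one_natCast_pow, Nat.card_Icc, Nat.add_sub_cancel, Nat.cast_pow, Nat.cast_pow]
    at hbound
  refine hbound.trans_eq ?_
  field_simp

theorem ae_haarAddCircle_eventually_exists_lt_norm_sum_fourier_sq {a : ℕ → ℤ}
    (ha : HasSparseDifferences (Set.range a)) {u : ℕ}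
    (hgrowth : (fun n => (a n : ℝ)) =O[atTop] fun n => (n : ℝ) ^ u) (s : ℕ) :
    ∀ᵐ x : AddCircle T ∂haarAddCircle, ∀ᶠ M : ℕ in atTop, ∃ h ∈ Icc (1 : ℤ) (M ^ 3),
      (M : ℝ) ^ s / 2 < ‖∑ n ∈ Icc 1 (M ^ s), fourier (h * a n) x‖ ^ 2 := by
  obtain ⟨C, hC⟩ :=
    exists_haarAddCircle_real_sum_norm_sum_fourier_sq_le_half_le (T := T) ha hgrowth s
  set small : ℕ → Set (AddCircle T) := fun M =>
    {x | ∑ h ∈ Icc (1 : ℤ) (M ^ 3), ‖∑ n ∈ Icc 1 (M ^ s), fourier (h * a n) x‖ ^ 2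
      ≤ (M : ℝ) ^ 3 * (M : ℝ) ^ s / 2}
  have hsummable : Summable fun M => haarAddCircle.real (small M) := by
    refine .of_norm_bounded_eventually_nat
      ((Real.summable_one_div_nat_pow.mpr one_lt_two).mul_left C) ?_
    filter_upwards [eventually_ge_atTop 1] with M hM
    simpa only [Real.norm_of_nonneg measureReal_nonneg] using hC M hM
  have hnotMem : ∀ᵐ x : AddCircle T ∂haarAddCircle, ∀ᶠ M : ℕ in atTop, x ∉ small M :=
    ae_eventually_notMem (by
      simpa only [ofReal_measureReal (measure_ne_top haarAddCircle _)]
        using hsummable.tsum_ofReal_ne_top)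
  filter_upwards [hnotMem] with x hx
  filter_upwards [hx] with M hM
  refine exists_lt_of_sum_lt ?_
  rw [sum_const, card_Icc_one_natCast_pow, nsmul_eq_mul, Nat.cast_pow, ← mul_div_assoc]
  exact not_le.mp hM

end FourierMeanSquare

section Koksma

open Finset
open scoped Real

theorem abs_card_div_sub_le_starDisc (N : ℕ) (x : ℕ → ℝ) {t : ℝ} (ht : t ∈ Set.Ioc (0 : ℝ) 1) :
    |(#{n ∈ Icc 1 N | 0 ≤ x n ∧ x n < t} : ℝ) / N - t| ≤ starDisc N x := by
  refine le_ciSup (f := fun t : Set.Ioc (0 : ℝ) 1 =>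
    |(#{n ∈ Icc 1 N | 0 ≤ x n ∧ x n < (t : ℝ)} : ℝ) / N - t|) ⟨1, ?_⟩ ⟨t, ht⟩
  rintro _ ⟨⟨s, hs₀, hs₁⟩, rfl⟩
  have hcard : (#{n ∈ Icc 1 N | 0 ≤ x n ∧ x n < s} : ℝ) ≤ N := by
    exact_mod_cast (card_filter_le _ _).trans_eq (Nat.card_Icc 1 N)
  refine abs_sub_le_iff.mpr ⟨?_, ?_⟩
  · linarith [div_le_one_of_le₀ hcard N.cast_nonneg]
  · linarith [show (0 : ℝ) ≤ (#{n ∈ Icc 1 N | 0 ≤ x n ∧ x n < s} : ℝ) / N by positivity]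

theorem starDisc_nonneg (N : ℕ) (x : ℕ → ℝ) : 0 ≤ starDisc N x :=
  Real.iSup_nonneg fun _ => abs_nonneg _

theorem abs_card_sub_mul_le_mul_starDisc (N : ℕ) (x : ℕ → ℝ) {t : ℝ}
    (ht : t ∈ Set.Ioc (0 : ℝ) 1) :
    |(#{n ∈ Icc 1 N | 0 ≤ x n ∧ x n < t} : ℝ) - N * t| ≤ N * starDisc N x := by
  rcases N.eq_zero_or_pos with rfl | hN
  · simp
  calc |(#{n ∈ Icc 1 N | 0 ≤ x n ∧ x n < t} : ℝ) - N * t|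
      = N * |(#{n ∈ Icc 1 N | 0 ≤ x n ∧ x n < t} : ℝ) / N - t| := by
        rw [← Nat.abs_cast N, ← abs_mul, Nat.abs_cast, mul_sub, mul_div_cancel₀]
        positivity
    _ ≤ N * starDisc N x := by
        gcongr
        exact abs_card_div_sub_le_starDisc N x ht

theorem intervalIntegrable_indicator_Ioi {E : Type*} [NormedAddCommGroup E] {g : ℝ → E} {a b : ℝ}
    (hg : IntervalIntegrable g volume a b) (y : ℝ) :
    IntervalIntegrable ((Set.Ioi y).indicator g) volume a b :=
  intervalIntegrable_iff.mpr ((intervalIntegrable_iff.mp hg).indicator measurableSet_Ioi)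

variable {E : Type*} [NormedAddCommGroup E] [NormedSpace ℝ E] [CompleteSpace E] {f f' : ℝ → E}

theorem integral_indicator_Ioi_eq_sub_of_hasDerivAt
    (hf : ∀ t ∈ Set.Icc (0 : ℝ) 1, HasDerivAt f (f' t) t)
    (hf' : IntervalIntegrable f' volume 0 1) {y : ℝ} (hy : y ∈ Set.Ico (0 : ℝ) 1) :
    ∫ t in (0 : ℝ)..1, (Set.Ioi y).indicator f' t = f 1 - f y := by
  have hsubset : Set.Icc y 1 ⊆ Set.Icc 0 1 := Set.Icc_subset_Icc_left hy.1
  rw [intervalIntegral.integral_of_le zero_le_one, setIntegral_indicator measurableSet_Ioi,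
    Set.Ioc_inter_Ioi, sup_of_le_right hy.1, ← intervalIntegral.integral_of_le hy.2.le]
  refine intervalIntegral.integral_eq_sub_of_hasDerivAt (fun t ht => hf t ?_) (hf'.mono_set ?_)
  · exact hsubset (Set.uIcc_of_le hy.2.le ▸ ht)
  · rwa [Set.uIcc_of_le hy.2.le, Set.uIcc_of_le zero_le_one]

theorem integral_smul_deriv_eq_sub_integral
    (hf : ∀ t ∈ Set.Icc (0 : ℝ) 1, HasDerivAt f (f' t) t)
    (hf' : IntervalIntegrable f' volume 0 1) :
    ∫ t in (0 : ℝ)..1, t • f' t = f 1 - ∫ t in (0 : ℝ)..1, f t := by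
  rw [← Set.uIcc_of_le zero_le_one] at hf
  simpa using intervalIntegral.integral_smul_deriv_eq_deriv_smul (fun t _ => hasDerivAt_id t) hf
    intervalIntegrable_const hf'

theorem sum_sub_smul_integral_eq_integral_smul_deriv
    (hf : ∀ t ∈ Set.Icc (0 : ℝ) 1, HasDerivAt f (f' t) t)
    (hf' : IntervalIntegrable f' volume 0 1) (N : ℕ) {x : ℕ → ℝ}
    (hx : ∀ n, x n ∈ Set.Ico (0 : ℝ) 1) :
    ∑ n ∈ Icc 1 N, f (x n) - (N : ℝ) • ∫ t in (0 : ℝ)..1, f t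
      = -∫ t in (0 : ℝ)..1, ((#{n ∈ Icc 1 N | 0 ≤ x n ∧ x n < t} : ℝ) - N * t) • f' t := by
  have hcount (t : ℝ) : (#{n ∈ Icc 1 N | 0 ≤ x n ∧ x n < t} : ℝ) • f' t
      = ∑ n ∈ Icc 1 N, (Set.Ioi (x n)).indicator f' t := by
    simp [Set.indicator_apply, sum_ite, fun n => (hx n).1, Nat.cast_smul_eq_nsmul]
  have hindicator (n : ℕ) := intervalIntegrable_indicator_Ioi hf' (x n)
  have hsmul : IntervalIntegrable (fun t => (N : ℝ) • t • f' t) volume 0 1 :=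
    (hf'.continuousOn_smul continuousOn_id).smul (N : ℝ)
  have hsum : IntervalIntegrable (fun t => ∑ n ∈ Icc 1 N, (Set.Ioi (x n)).indicator f' t)
      volume 0 1 := by
    simpa only [sum_fn] using IntervalIntegrable.sum _ fun n _ => hindicator n
  simp only [sub_smul, mul_smul, hcount]
  rw [intervalIntegral.integral_sub hsum hsmul, intervalIntegral.integral_smul,
    integral_smul_deriv_eq_sub_integral hf hf',
    intervalIntegral.integral_finsetSum fun n _ => hindicator n,
    sum_congr rfl fun n _ => integral_indicator_Ioi_eq_sub_of_hasDerivAt hf hf' (hx n),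
    sum_sub_distrib, sum_const, Nat.card_Icc, Nat.add_sub_cancel, smul_sub,
    Nat.cast_smul_eq_nsmul, Nat.cast_smul_eq_nsmul]
  abel

theorem norm_sum_sub_smul_integral_le_mul_starDisc
    (hf : ∀ t ∈ Set.Icc (0 : ℝ) 1, HasDerivAt f (f' t) t)
    (hf' : IntervalIntegrable f' volume 0 1) (N : ℕ) {x : ℕ → ℝ}
    (hx : ∀ n, x n ∈ Set.Ico (0 : ℝ) 1) :
    ‖∑ n ∈ Icc 1 N, f (x n) - (N : ℝ) • ∫ t in (0 : ℝ)..1, f t‖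
      ≤ N * starDisc N x * ∫ t in (0 : ℝ)..1, ‖f' t‖ := by
  rw [sum_sub_smul_integral_eq_integral_smul_deriv hf hf' N hx, norm_neg,
    ← intervalIntegral.integral_const_mul]
  refine intervalIntegral.norm_integral_le_of_norm_le zero_le_one (.of_forall fun t ht => ?_)
    (hf'.norm.const_mul _)
  rw [norm_smul]
  gcongr
  exact abs_card_sub_mul_le_mul_starDisc N x ht

theorem norm_sum_fourier_le_mul_starDisc {h : ℤ} (hh : h ≠ 0) (N : ℕ) {x : ℕ → ℝ}
    (hx : ∀ n, x n ∈ Set.Ico (0 : ℝ) 1) :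
    ‖∑ n ∈ Icc 1 N, fourier h (x n : UnitAddCircle)‖ ≤ 2 * π * |(h : ℝ)| * (N * starDisc N x) := by
  set f' : ℝ → ℂ := fun t => 2 * π * Complex.I * h * fourier h (t : UnitAddCircle)
  have hf (t : ℝ) : HasDerivAt (fun t : ℝ => fourier h (t : UnitAddCircle)) (f' t) t := by
    simpa only [Complex.ofReal_one, div_one] using hasDerivAt_fourier 1 h t
  have hf' : IntervalIntegrable f' volume 0 1 :=
    Continuous.intervalIntegrable (by fun_prop) _ _
  have hmean : ∫ t in (0 : ℝ)..1, fourier h (t : UnitAddCircle) = 0 := by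
    have hderiv : ∫ t in (0 : ℝ)..1, f' t = 0 := by
      rw [intervalIntegral.integral_eq_sub_of_hasDerivAt (fun t _ => hf t) hf',
        AddCircle.coe_period, AddCircle.coe_zero, sub_self]
    rw [intervalIntegral.integral_const_mul] at hderiv
    simpa [hh, Real.pi_ne_zero] using hderiv
  have hnorm (t : ℝ) : ‖f' t‖ = 2 * π * |(h : ℝ)| := by
    rw [norm_mul, fourier_apply, Circle.norm_coe]
    simp [abs_of_pos Real.pi_pos]
  have hkoksma := norm_sum_sub_smul_integral_le_mul_starDisc (fun t _ => hf t) hf' N hx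
  simp only [hmean, smul_zero, sub_zero, hnorm, intervalIntegral.integral_const, one_smul]
    at hkoksma
  linarith

end Koksma

section Discrepancy

open Finset AddCircle
open scoped Real

theorem ae_coe_of_ae_haarAddCircle {T : ℝ} [hT : Fact (0 < T)] {p : AddCircle T → Prop}
    (hp : ∀ᵐ x ∂haarAddCircle, p x) : ∀ᵐ α : ℝ, p α := by
  have hvolume : ∀ᵐ x : AddCircle T, p x := by
    rw [volume_eq_smul_haarAddCircle]
    exact Measure.ae_smul_measure hp _
  rw [← Measure.restrict_univ (μ := (volume : Measure ℝ)), ← iUnion_Ioc_zsmul hT.out,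
    ae_restrict_iUnion_iff]
  intro n
  rw [add_one_zsmul]
  exact (AddCircle.measurePreserving_mk T (n • T)).quasiMeasurePreserving.ae hvolume

theorem fourier_coe_fract_mul (h a : ℤ) (α : ℝ) :
    fourier h ((Int.fract ((a : ℝ) * α) : ℝ) : UnitAddCircle) =
      fourier (h * a) (α : UnitAddCircle) := by
  rw [AddCircle.coe_fract, ← zsmul_eq_mul, AddCircle.coe_zsmul, fourier_apply, fourier_apply,
    ← mul_zsmul, mul_comm]

theorem ae_eventually_sqrt_le_mul_starDisc {a : ℕ → ℤ} (ha : HasSparseDifferences (Set.range a))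
    {u : ℕ} (hgrowth : (fun n => (a n : ℝ)) =O[atTop] fun n => (n : ℝ) ^ u) (s : ℕ) :
    ∀ᵐ α : ℝ, ∀ᶠ M : ℕ in atTop, √((M : ℝ) ^ s / 2) ≤ 2 * π * (M : ℝ) ^ 3 *
      ((M ^ s : ℕ) * starDisc (M ^ s) fun n => Int.fract ((a n : ℝ) * α)) := by
  filter_upwards [ae_coe_of_ae_haarAddCircle (T := 1)
    (ae_haarAddCircle_eventually_exists_lt_norm_sum_fourier_sq ha hgrowth s)] with α hα
  filter_upwards [hα] with M ⟨h, hh, hlarge⟩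
  obtain ⟨hh₁, hhM⟩ := mem_Icc.mp hh
  have hh_abs : |(h : ℝ)| ≤ (M : ℝ) ^ 3 := by
    rw [abs_of_nonneg (by positivity)]
    exact_mod_cast hhM
  have hkoksma := norm_sum_fourier_le_mul_starDisc (zero_lt_one.trans_le hh₁).ne' (M ^ s)
    (x := fun n => Int.fract ((a n : ℝ) * α)) fun n => ⟨Int.fract_nonneg _, Int.fract_lt_one _⟩
  simp only [fourier_coe_fract_mul] at hkoksma
  calc √((M : ℝ) ^ s / 2) ≤ ‖∑ n ∈ Icc 1 (M ^ s), fourier (h * a n) (α : UnitAddCircle)‖ :=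
        (Real.sqrt_le_left (norm_nonneg _)).mpr hlarge.le
    _ ≤ 2 * π * |(h : ℝ)| *
          ((M ^ s : ℕ) * starDisc (M ^ s) fun n => Int.fract ((a n : ℝ) * α)) := hkoksma
    _ ≤ _ := by
        gcongr
        exact mul_nonneg (Nat.cast_nonneg _) (starDisc_nonneg _ _)

theorem eventually_mul_rpow_le_sqrt {ε : ℝ} {s : ℕ} (hs : 3 < s * ε) :
    ∀ᶠ M : ℕ in atTop,
      2 * π * (M : ℝ) ^ 3 * ((M ^ s : ℕ) : ℝ) ^ (1 / 2 - ε) ≤ √((M : ℝ) ^ s / 2) := by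
  have htendsto : Tendsto (fun M : ℕ => (M : ℝ) ^ (s * ε - 3)) atTop atTop :=
    (tendsto_rpow_atTop (sub_pos.mpr hs)).comp tendsto_natCast_atTop_atTop
  filter_upwards [htendsto.eventually_ge_atTop (2 * π * √2), eventually_gt_atTop 0]
    with M hlarge hM
  have hM₀ : (0 : ℝ) < M := by exact_mod_cast hM
  have hpow : 2 * π * √2 * (M : ℝ) ^ 3 ≤ ((M : ℝ) ^ s) ^ ε := by
    calc 2 * π * √2 * (M : ℝ) ^ 3 ≤ (M : ℝ) ^ (s * ε - 3) * (M : ℝ) ^ (3 : ℝ) := by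
          rw [Real.rpow_ofNat]
          gcongr
      _ = ((M : ℝ) ^ s) ^ ε := by
          rw [← Real.rpow_add hM₀, sub_add_cancel, Real.rpow_natCast_mul hM₀.le]
  rw [Nat.cast_pow, Real.rpow_sub (by positivity), ← Real.sqrt_eq_rpow,
    Real.sqrt_div (by positivity)]
  calc 2 * π * (M : ℝ) ^ 3 * (√((M : ℝ) ^ s) / ((M : ℝ) ^ s) ^ ε)
      = 2 * π * √2 * (M : ℝ) ^ 3 * (√((M : ℝ) ^ s) / ((M : ℝ) ^ s) ^ ε / √2) := by field_simp
    _ ≤ ((M : ℝ) ^ s) ^ ε * (√((M : ℝ) ^ s) / ((M : ℝ) ^ s) ^ ε / √2) := by gcongr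
    _ = √((M : ℝ) ^ s) / √2 := by field_simp

theorem ae_frequently_rpow_le_mul_starDisc {a : ℕ → ℤ} (ha : HasSparseDifferences (Set.range a))
    {u : ℕ} (hgrowth : (fun n => (a n : ℝ)) =O[atTop] fun n => (n : ℝ) ^ u) :
    ∀ᵐ α : ℝ, ∀ ε : ℝ, 0 < ε → ∃ᶠ N : ℕ in atTop,
      (N : ℝ) ^ (1 / 2 - ε) ≤ N * starDisc N fun n => Int.fract ((a n : ℝ) * α) := by
  filter_upwards [ae_all_iff.mpr fun s => ae_eventually_sqrt_le_mul_starDisc ha hgrowth s]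
    with α hα ε hε
  obtain ⟨s, hs⟩ := exists_nat_gt (3 / ε)
  rw [div_lt_iff₀ hε] at hs
  have hs₀ : s ≠ 0 := by rintro rfl; norm_num at hs
  refine (tendsto_pow_atTop hs₀).frequently (Eventually.frequently ?_)
  filter_upwards [hα s, eventually_mul_rpow_le_sqrt hs, eventually_gt_atTop 0]
    with M hlower hupper hM
  exact le_of_mul_le_mul_left (hupper.trans hlower) (by positivity)

end Discrepancy

theorem stmt6_general (P : Polynomial ℤ) (hdeg : 2 ≤ P.natDegree) (m : ℕ → ℤ) (t : ℕ)
    (hm_growth : ∃ n₀ : ℕ, ∀ n : ℕ, n₀ ≤ n → |m n| ≤ (n : ℤ) ^ t) :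
    ∀ᵐ α ∂(volume : Measure ℝ), ∀ ε > 0, ∃ᶠ N : ℕ in atTop,
      (N : ℝ) * starDisc N (fun n => Int.fract (((P.eval (m n) : ℤ) : ℝ) * α)) ≥
        (N : ℝ) ^ ((1 : ℝ) / 2 - ε) := by
  have hsparse : HasSparseDifferences (Set.range fun n => P.eval (m n)) :=
    (hasSparseDifferences_range_eval hdeg).mono (Set.range_comp_subset_range m fun x => P.eval x)
  have hm : (fun n => (m n : ℝ)) =O[atTop] fun n => (n : ℝ) ^ t := by
    obtain ⟨n₀, hn₀⟩ := hm_growth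
    refine .of_norm_eventuallyLE ?_
    filter_upwards [eventually_ge_atTop n₀] with n hn
    rw [Real.norm_eq_abs]
    exact_mod_cast hn₀ n hn
  have hgrowth := isBigO_eval_comp P hm <| (eventually_ge_atTop 1).mono fun n hn =>
    one_le_pow₀ (Nat.one_le_cast.mpr hn)
  simp only [← pow_mul] at hgrowth
  exact ae_frequently_rpow_le_mul_starDisc hsparse hgrowth

theorem stmt6 (P : Polynomial ℤ) (hdeg : 2 ≤ P.natDegree)
    (m : ℕ → ℤ)
    (hm_distinct : ∀ i j : ℕ, 1 ≤ i → 1 ≤ j → m i = m j → i = j)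
    (t : ℕ) (hm_growth : ∃ n₀ : ℕ, ∀ n : ℕ, n₀ ≤ n → |m n| ≤ (n : ℤ) ^ t) :
    ∀ᵐ α ∂(volume : Measure ℝ), ∀ ε > 0, ∃ᶠ N : ℕ in atTop,
      (N : ℝ) * starDisc N (fun n => Int.fract (((P.eval (m n) : ℤ) : ℝ) * α)) ≥
        (N : ℝ) ^ ((1 : ℝ) / 2 - ε) :=
  stmt6_general P hdeg m t hm_growth
end

section
/- Let (a_n)_{n≥1} be the sequence of Rudin–Shapiro integers. Then the additive energy of its initial segments is of maximal possible order: there exists a constant c > 0 such that E({a_1, …, a_N}) ≥ c·N³ for all N ≥ 1. -/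
open Filter MeasureTheory

/-- Number of occurrences of the block `11` in a list of binary digits. -/
def pairs11 : List ℕ → ℕ
  | a :: b :: rest => (if a = 1 ∧ b = 1 then 1 else 0) + pairs11 (b :: rest)
  | _ => 0

/-- The Rudin–Shapiro sequence: `rs k = 1` if the number of `11`-blocks in the binary
representation of `k` is even, and `rs k = -1` otherwise. -/
def rs (k : ℕ) : ℤ := if pairs11 (Nat.digits 2 k) % 2 = 0 then 1 else -1

/-- The `n`-th Rudin–Shapiro integer (indexed from `n = 1`): the increasing enumeration
of `{k : rs k = 1}`, so `rsInt 1 = 0`, `rsInt 2 = 1`, `rsInt 3 = 2`, `rsInt 4 = 4`, ... -/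
noncomputable def rsInt (n : ℕ) : ℕ := Nat.nth (fun k => rs k = 1) (n - 1)

/-- Additive energy of a finite set of integers. -/
def addEnergy (A : Finset ℤ) : ℕ :=
  ((A ×ˢ A ×ˢ A ×ˢ A).filter fun p => p.1 - p.2.1 = p.2.2.1 - p.2.2.2).card

/-!
Each block `{4q, 4q + 1, 4q + 2, 4q + 3}` contains a Rudin–Shapiro integer, because
`rs (4q + 2) = rs (2q + 1) = -rs (4q + 3)`. So the first `N` of them lie in `[0, 4N)` and have
at most `8N` distinct pairwise sums. By Cauchy–Schwarz, `|A|⁴ ≤ |A + A| E(A)`, which gives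
`N³ ≤ 8 E(A)`.
-/

open scoped Pointwise

theorem addEnergy_eq_finsetAddEnergy (A : Finset ℤ) : addEnergy A = Finset.addEnergy A A := by
  refine Finset.card_bij' (fun x _ => ((x.1, x.2.2.1), x.2.2.2, x.2.1))
    (fun x _ => (x.1.1, x.2.2, x.1.2, x.2.1)) ?_ ?_ (fun _ _ => rfl) (fun _ _ => rfl)
  all_goals
    intro x hx
    simp only [Finset.mem_filter, Finset.mem_product] at hx ⊢
    exact ⟨by tauto, by lia⟩

theorem card_add_self_le_of_subset_Ico {A : Finset ℤ} {a : ℤ} {M : ℕ}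
    (hA : A ⊆ Finset.Ico a (a + M)) : (A + A).card ≤ 2 * M := by
  have hsub : A + A ⊆ Finset.Ico (2 * a) (2 * a + 2 * M) := by
    refine Finset.add_subset_iff.2 fun x hx y hy => ?_
    have hx' := Finset.mem_Ico.1 (hA hx)
    have hy' := Finset.mem_Ico.1 (hA hy)
    exact Finset.mem_Ico.2 (by lia)
  calc (A + A).card ≤ (Finset.Ico (2 * a) (2 * a + 2 * M)).card := Finset.card_le_card hsub
    _ = 2 * M := by rw [Int.card_Ico]; lia

theorem card_pow_three_le_mul_addEnergy {A : Finset ℤ} {a : ℤ} {K : ℕ}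
    (hA : A ⊆ Finset.Ico a (a + (K * A.card : ℕ))) : A.card ^ 3 ≤ 2 * K * addEnergy A := by
  rcases A.card.eq_zero_or_pos with hzero | hpos
  · simp [hzero]
  refine Nat.le_of_mul_le_mul_left ?_ hpos
  calc A.card * A.card ^ 3 = A.card ^ 2 * A.card ^ 2 := by ring
    _ ≤ (A + A).card * Finset.addEnergy A A := Finset.le_card_add_mul_addEnergy A A
    _ ≤ 2 * (K * A.card) * addEnergy A := by
      rw [addEnergy_eq_finsetAddEnergy]
      gcongr
      exact card_add_self_le_of_subset_Ico hA
    _ = A.card * (2 * K * addEnergy A) := by ring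

/-- `MeetsEveryBlock p K`: every block `[K q, K (q + 1))` contains an element of `{k | p k}`.
This is a quantitative form of syndeticity, used to bound the growth of `Nat.nth p`. -/
def MeetsEveryBlock (p : ℕ → Prop) (K : ℕ) : Prop :=
  ∀ q, ∃ i < K, p (K * q + i)

namespace MeetsEveryBlock

variable {p : ℕ → Prop} {K : ℕ}

theorem infinite (hp : MeetsEveryBlock p K) : {k | p k}.Infinite := by
  refine Set.infinite_of_forall_exists_gt fun a => ?_
  obtain ⟨i, hi, hpi⟩ := hp (a + 1)
  have hK : 0 < K := i.zero_le.trans_lt hi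
  exact ⟨_, hpi, by linarith [Nat.le_mul_of_pos_left (a + 1) hK]⟩

theorem le_count_mul [DecidablePred p] (hp : MeetsEveryBlock p K) (n : ℕ) :
    n ≤ Nat.count p (K * n) := by
  induction n with
  | zero => exact Nat.zero_le _
  | succ n ih =>
    rw [Nat.mul_succ, Nat.count_add]
    exact Nat.add_le_add ih (Nat.one_le_iff_ne_zero.2 (Nat.count_ne_iff_exists.2 (hp n)))

theorem nth_lt_mul (hp : MeetsEveryBlock p K) (n : ℕ) : Nat.nth p n < K * (n + 1) := by
  classical
  exact Nat.nth_lt_of_lt_count (hp.le_count_mul (n + 1))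

theorem pow_three_le_mul_addEnergy_image_nth (hp : MeetsEveryBlock p K) (N : ℕ) :
    N ^ 3 ≤ 2 * K * addEnergy ((Finset.range N).image fun n => (Nat.nth p n : ℤ)) := by
  set A := (Finset.range N).image fun n => (Nat.nth p n : ℤ) with hA
  have hcard : A.card = N := by
    have hinj : Function.Injective fun n => (Nat.nth p n : ℤ) :=
      Nat.cast_injective.comp (Nat.nth_injective hp.infinite)
    rw [hA, Finset.card_image_of_injective _ hinj, Finset.card_range]
  have hsub : A ⊆ Finset.Ico (0 : ℤ) (0 + (K * A.card : ℕ)) := by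
    refine Finset.image_subset_iff.2 fun n hn => ?_
    have hlt : Nat.nth p n < K * A.card :=
      calc Nat.nth p n < K * (n + 1) := hp.nth_lt_mul n
        _ ≤ K * A.card := by rw [hcard]; gcongr; exact Finset.mem_range.1 hn
    exact Finset.mem_Ico.2 (by lia)
  simpa only [hcard] using card_pow_three_le_mul_addEnergy hsub

end MeetsEveryBlock

theorem pairs11_zero_cons (l : List ℕ) : pairs11 (0 :: l) = pairs11 l := by
  cases l <;> simp [pairs11]

theorem pairs11_one_one_cons (l : List ℕ) : pairs11 (1 :: 1 :: l) = pairs11 (1 :: l) + 1 := by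
  simp [pairs11, add_comm]

theorem rs_eq_one_or_eq_neg_one (k : ℕ) : rs k = 1 ∨ rs k = -1 :=
  ite_eq_or_eq _ _ _

theorem rs_two_mul (k : ℕ) : rs (2 * k) = rs k := by
  rcases k.eq_zero_or_pos with rfl | hk
  · rfl
  · rw [rs, rs, Nat.digits_base_mul one_lt_two hk, pairs11_zero_cons]

theorem digits_two_mul_add_one (k : ℕ) : Nat.digits 2 (2 * k + 1) = 1 :: Nat.digits 2 k := by
  rw [add_comm]
  exact Nat.digits_add 2 one_lt_two 1 k one_lt_two (Or.inl one_ne_zero)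

theorem rs_four_mul_add_three (k : ℕ) : rs (4 * k + 3) = -rs (2 * k + 1) := by
  rw [show 4 * k + 3 = 2 * (2 * k + 1) + 1 by ring]
  simp only [rs, digits_two_mul_add_one, pairs11_one_one_cons]
  grind

theorem meetsEveryBlock_rs_eq_one : MeetsEveryBlock (fun k => rs k = 1) 4 := by
  intro q
  change ∃ i < 4, rs (4 * q + i) = 1
  rcases rs_eq_one_or_eq_neg_one (2 * q + 1) with h | h
  · refine ⟨2, by norm_num, ?_⟩
    rw [show 4 * q + 2 = 2 * (2 * q + 1) by ring, rs_two_mul, h]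
  · exact ⟨3, by norm_num, by rw [rs_four_mul_add_three, h, neg_neg]⟩

theorem image_rsInt_Icc_one (N : ℕ) : (Finset.Icc 1 N).image (fun n => (rsInt n : ℤ)) =
    (Finset.range N).image fun n => (Nat.nth (fun k => rs k = 1) n : ℤ) := by
  have hshift : Finset.Icc 1 N = (Finset.range N).image (· + 1) := by
    rw [Finset.range_eq_Ico, Finset.image_add_right_Ico, zero_add,
      Finset.Ico_add_one_right_eq_Icc]
  rw [hshift, Finset.image_image]
  rfl

theorem stmt7 : ∃ c : ℝ, 0 < c ∧ ∀ N : ℕ, 1 ≤ N →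
    c * (N : ℝ) ^ 3 ≤ (addEnergy ((Finset.Icc 1 N).image fun n => (rsInt n : ℤ)) : ℝ) := by
  refine ⟨1 / 8, by norm_num, fun N _ => ?_⟩
  have hnat := meetsEveryBlock_rs_eq_one.pow_three_le_mul_addEnergy_image_nth N
  rw [← image_rsInt_Icc_one] at hnat
  have hreal : (N : ℝ) ^ 3 ≤
      2 * 4 * addEnergy ((Finset.Icc 1 N).image fun n => (rsInt n : ℤ)) := by
    exact_mod_cast hnat
  linarith
end
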